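/- (Diversity collapse without DropOut.) Fix M ≥ 1 and p ∈ {1,…,M}. For each n, let z₁⁽ⁿ⁾,…,z_M⁽ⁿ⁾ be pairwise uncorrelated standardized real random variables, let y⁽ⁿ⁾ be a standardized real random variable, set the weights θ_m⁽ⁿ⁾ = ρ_{z_m⁽ⁿ⁾, y⁽ⁿ⁾}² (the squared correlation of each base model with the target), and define the ensemble prediction z̄⁽ⁿ⁾ = Σ_m θ_m⁽ⁿ⁾ z_m⁽ⁿ⁾ and its diversity α_n = E[Σ_m θ_m⁽ⁿ⁾ (z_m⁽ⁿ⁾ − z̄⁽ⁿ⁾)²]. If ρ_{z_p⁽ⁿ⁾, y⁽ⁿ⁾} → 1 as n → ∞, then α_n → 0. -/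

import Mathlib

open MeasureTheory ProbabilityTheory Filter

/-- The covariance `Cov(X, Y) = E[(X − E[X])·(Y − E[Y])]` of two real-valued
random variables.  For standardized `X` and `Y` this equals their correlation. -/
noncomputable def covar {Ω : Type*} [MeasurableSpace Ω] (μ : Measure Ω) (X Y : Ω → ℝ) : ℝ :=
  ∫ ω, (X ω - ∫ ω', X ω' ∂μ) * (Y ω - ∫ ω', Y ω' ∂μ) ∂μ

/-!
For the squared covariance weights, Bessel's inequality gives `∑ θ_m ≤ 1`. Expanding the squares,
the uncorrelated centered models satisfy
`E[∑ θ_m (z_m − z̄)²] = ∑ θ_m (1 − θ_m) Var z_m − (1 − ∑ θ_m) ∑ θ_m² Var z_m`,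
so the diversity is at most `∑ θ_m (1 − θ_m) ≤ 1 − θ_p²`, uniformly in the size of the ensemble.
-/

lemma covar_eq_covariance {Ω : Type*} [MeasurableSpace Ω] (μ : Measure Ω) (X Y : Ω → ℝ) :
    covar μ X Y = cov[X, Y; μ] :=
  rfl

/-- The diversity (ambiguity) `E[∑ m, θ m * (z m − z̄)²]` of the ensemble with base models `z m`,
weights `θ m` and prediction `z̄ = ∑ m, θ m * z m`. The weights need not sum to one. -/
noncomputable def ensembleDiversity {Ω ι : Type*} [MeasurableSpace Ω] [Fintype ι] (μ : Measure Ω)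
    (θ : ι → ℝ) (z : ι → Ω → ℝ) : ℝ :=
  ∫ ω, ∑ m, θ m * (z m ω - ∑ m', θ m' * z m' ω) ^ 2 ∂μ

section Uncorrelated

variable {Ω ι : Type*} [MeasurableSpace Ω] [Fintype ι] {μ : Measure Ω} [IsFiniteMeasure μ]
  {z : ι → Ω → ℝ}

lemma variance_sum_mul_of_pairwise_covariance_eq_zero (hz : ∀ i, MemLp (z i) 2 μ)
    (huncorr : Pairwise fun i j ↦ cov[z i, z j; μ] = 0) (b : ι → ℝ) :
    Var[fun ω ↦ ∑ i, b i * z i ω; μ] = ∑ i, b i ^ 2 * Var[z i; μ] := by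
  rw [variance_fun_sum fun i ↦ (hz i).const_mul (b i)]
  refine Finset.sum_congr rfl fun i _ ↦ ?_
  rw [Fintype.sum_eq_single i, covariance_self ((hz i).const_mul (b i)).aemeasurable,
    variance_const_mul]
  intro j hji
  rw [covariance_const_mul_left, covariance_const_mul_right, huncorr hji.symm, mul_zero, mul_zero]

lemma variance_sub_sum_mul_of_pairwise_covariance_eq_zero {u : Ω → ℝ} (hu : MemLp u 2 μ)
    (hz : ∀ i, MemLp (z i) 2 μ) (huncorr : Pairwise fun i j ↦ cov[z i, z j; μ] = 0) (b : ι → ℝ) :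
    Var[fun ω ↦ u ω - ∑ i, b i * z i ω; μ] =
      Var[u; μ] - 2 * ∑ i, b i * cov[z i, u; μ] + ∑ i, b i ^ 2 * Var[z i; μ] := by
  have hbz (i : ι) : MemLp (fun ω ↦ b i * z i ω) 2 μ := (hz i).const_mul (b i)
  rw [variance_fun_sub hu (memLp_finsetSum _ fun i _ ↦ hbz i), covariance_comm,
    covariance_fun_sum_left hbz hu, variance_sum_mul_of_pairwise_covariance_eq_zero hz huncorr]
  simp only [covariance_const_mul_left]

lemma sum_sq_covariance_le_variance {y : Ω → ℝ} (hy : MemLp y 2 μ) (hz : ∀ i, MemLp (z i) 2 μ)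
    (huncorr : Pairwise fun i j ↦ cov[z i, z j; μ] = 0) (hvar : ∀ i, Var[z i; μ] ≤ 1) :
    ∑ i, cov[z i, y; μ] ^ 2 ≤ Var[y; μ] := by
  have hresidual : 0 ≤ Var[y; μ] - 2 * ∑ i, cov[z i, y; μ] * cov[z i, y; μ]
      + ∑ i, cov[z i, y; μ] ^ 2 * Var[z i; μ] := by
    rw [← variance_sub_sum_mul_of_pairwise_covariance_eq_zero hy hz huncorr]
    exact variance_nonneg _ _
  have hprojection : ∑ i, cov[z i, y; μ] ^ 2 * Var[z i; μ] ≤ ∑ i, cov[z i, y; μ] ^ 2 :=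
    Finset.sum_le_sum fun i _ ↦ mul_le_of_le_one_right (sq_nonneg _) (hvar i)
  simp only [← sq] at hresidual
  linarith

lemma ensembleDiversity_eq_sum_variance (hz : ∀ i, MemLp (z i) 2 μ) (hmean : ∀ i, μ[z i] = 0)
    (θ : ι → ℝ) :
    ensembleDiversity μ θ z = ∑ m, θ m * Var[fun ω ↦ z m ω - ∑ i, θ i * z i ω; μ] := by
  have hθz (i : ι) : MemLp (fun ω ↦ θ i * z i ω) 2 μ := (hz i).const_mul (θ i)
  have hdev (m : ι) : MemLp (fun ω ↦ z m ω - ∑ i, θ i * z i ω) 2 μ :=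
    (hz m).sub (memLp_finsetSum _ fun i _ ↦ hθz i)
  have hdev_mean (m : ι) : ∫ ω, z m ω - ∑ i, θ i * z i ω ∂μ = 0 := by
    rw [integral_sub ((hz m).integrable one_le_two)
        (integrable_finsetSum _ fun i _ ↦ (hθz i).integrable one_le_two),
      integral_finsetSum _ fun i _ ↦ (hθz i).integrable one_le_two]
    simp [integral_const_mul, hmean]
  rw [ensembleDiversity, integral_finsetSum _ fun m _ ↦ (hdev m).integrable_sq.const_mul (θ m)]
  simp only [integral_const_mul,
    fun m ↦ variance_of_integral_eq_zero (hdev m).aemeasurable (hdev_mean m)]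

lemma ensembleDiversity_eq_of_pairwise_covariance_eq_zero (hz : ∀ i, MemLp (z i) 2 μ)
    (hmean : ∀ i, μ[z i] = 0) (huncorr : Pairwise fun i j ↦ cov[z i, z j; μ] = 0) (θ : ι → ℝ) :
    ensembleDiversity μ θ z = ∑ m, θ m * (1 - θ m) * Var[z m; μ]
      - (1 - ∑ m, θ m) * ∑ m, θ m ^ 2 * Var[z m; μ] := by
  have hcov (m : ι) : ∑ i, θ i * cov[z i, z m; μ] = θ m * Var[z m; μ] := by
    rw [Fintype.sum_eq_single m fun i him ↦ by rw [huncorr him, mul_zero],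
      covariance_self (hz m).aemeasurable]
  rw [ensembleDiversity_eq_sum_variance hz hmean, sub_mul, one_mul, Finset.sum_mul,
    ← Finset.sum_sub_distrib, ← Finset.sum_sub_distrib]
  refine Finset.sum_congr rfl fun m _ ↦ ?_
  rw [variance_sub_sum_mul_of_pairwise_covariance_eq_zero (hz m) hz huncorr, hcov]
  ring

lemma ensembleDiversity_le_one_sub_sq (hz : ∀ i, MemLp (z i) 2 μ) (hmean : ∀ i, μ[z i] = 0)
    (huncorr : Pairwise fun i j ↦ cov[z i, z j; μ] = 0) (hvar : ∀ i, Var[z i; μ] ≤ 1)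
    {θ : ι → ℝ} (hθ : ∀ m, 0 ≤ θ m) (hsum : ∑ m, θ m ≤ 1) (p : ι) :
    ensembleDiversity μ θ z ≤ 1 - θ p ^ 2 := by
  have hθ_le_one (m : ι) : θ m ≤ 1 :=
    (Finset.single_le_sum (fun i _ ↦ hθ i) (Finset.mem_univ m)).trans hsum
  calc
    ensembleDiversity μ θ z = ∑ m, θ m * (1 - θ m) * Var[z m; μ]
        - (1 - ∑ m, θ m) * ∑ m, θ m ^ 2 * Var[z m; μ] :=
      ensembleDiversity_eq_of_pairwise_covariance_eq_zero hz hmean huncorr θ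
    _ ≤ ∑ m, θ m * (1 - θ m) * Var[z m; μ] :=
      sub_le_self _ <| mul_nonneg (sub_nonneg.2 hsum) <|
        Finset.sum_nonneg fun m _ ↦ mul_nonneg (sq_nonneg _) (variance_nonneg _ _)
    _ ≤ ∑ m, θ m * (1 - θ m) :=
      Finset.sum_le_sum fun m _ ↦
        mul_le_of_le_one_right (mul_nonneg (hθ m) (sub_nonneg.2 (hθ_le_one m))) (hvar m)
    _ = ∑ m, θ m - ∑ m, θ m ^ 2 := by
      rw [← Finset.sum_sub_distrib]
      exact Finset.sum_congr rfl fun m _ ↦ by ring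
    _ ≤ 1 - θ p ^ 2 :=
      sub_le_sub hsum <| Finset.single_le_sum (f := fun m ↦ θ m ^ 2)
        (fun m _ ↦ sq_nonneg _) (Finset.mem_univ p)

end Uncorrelated

lemma ensembleDiversity_nonneg {Ω ι : Type*} [MeasurableSpace Ω] [Fintype ι] (μ : Measure Ω)
    {θ : ι → ℝ} (hθ : ∀ m, 0 ≤ θ m) (z : ι → Ω → ℝ) : 0 ≤ ensembleDiversity μ θ z :=
  integral_nonneg fun _ ↦ Finset.sum_nonneg fun m _ ↦ mul_nonneg (hθ m) (sq_nonneg _)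

theorem diversity_collapse_general {α : Type*} {l : Filter α} {Ω ι : α → Type*}
    [∀ n, MeasurableSpace (Ω n)] [∀ n, Fintype (ι n)]
    {μ : ∀ n, Measure (Ω n)} [∀ n, IsFiniteMeasure (μ n)] (p : ∀ n, ι n)
    {z : ∀ n, ι n → Ω n → ℝ} {y : ∀ n, Ω n → ℝ}
    (hz : ∀ n m, MemLp (z n m) 2 (μ n)) (hzmean : ∀ n m, (μ n)[z n m] = 0)
    (hzvar : ∀ n m, Var[z n m; μ n] ≤ 1)
    (huncorr : ∀ n, Pairwise fun m m' ↦ cov[z n m, z n m'; μ n] = 0)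
    (hy : ∀ n, MemLp (y n) 2 (μ n)) (hyvar : ∀ n, Var[y n; μ n] ≤ 1)
    (hlim : Tendsto (fun n ↦ cov[z n (p n), y n; μ n] ^ 2) l (nhds 1)) :
    Tendsto (fun n ↦ ensembleDiversity (μ n) (fun m ↦ cov[z n m, y n; μ n] ^ 2) (z n))
      l (nhds 0) := by
  have hweights (n : α) : ∑ m, cov[z n m, y n; μ n] ^ 2 ≤ 1 :=
    (sum_sq_covariance_le_variance (hy n) (hz n) (huncorr n) (hzvar n)).trans (hyvar n)
  have hbound : Tendsto (fun n ↦ 1 - (cov[z n (p n), y n; μ n] ^ 2) ^ 2) l (nhds 0) := by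
    simpa using (hlim.pow 2).const_sub 1
  exact squeeze_zero (fun n ↦ ensembleDiversity_nonneg _ (fun m ↦ sq_nonneg _) _)
    (fun n ↦ ensembleDiversity_le_one_sub_sq (hz n) (hzmean n) (huncorr n) (hzvar n)
      (fun m ↦ sq_nonneg _) (hweights n) (p n)) hbound

/-- **Diversity collapse without DropOut.**  Fix `M ≥ 1` and `p`.  For each `n`, let
`z n 1, …, z n M` be pairwise uncorrelated standardized random variables, `y n` a
standardized target, and take the weights `θ n m = ρ_{z n m, y n}²` (squared
correlations).  If the correlation of the preferred model `ρ_{z n p, y n} → 1`, then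
the diversity `α n = E[∑ m, θ n m · (z n m − z̄ n)²]` of the ensemble prediction
`z̄ n = ∑ m, θ n m · z n m` collapses to `0`. -/
theorem diversity_collapse {Ω : ℕ → Type*} [∀ n, MeasurableSpace (Ω n)]
    (μ : ∀ n, Measure (Ω n)) [∀ n, IsProbabilityMeasure (μ n)]
    (M : ℕ) (hM : 1 ≤ M) (p : Fin M)
    (z : ∀ n, Fin M → Ω n → ℝ) (y : ∀ n, Ω n → ℝ) (θ : ℕ → Fin M → ℝ)
    (hzmeas : ∀ n m, Measurable (z n m))
    (hzmean : ∀ n m, ∫ ω, z n m ω ∂(μ n) = 0)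
    (hzvar : ∀ n m, variance (z n m) (μ n) = 1)
    (huncorr : ∀ n, ∀ m m', m ≠ m' → covar (μ n) (z n m) (z n m') = 0)
    (hymeas : ∀ n, Measurable (y n))
    (hymean : ∀ n, ∫ ω, y n ω ∂(μ n) = 0)
    (hyvar : ∀ n, variance (y n) (μ n) = 1)
    (hθ : ∀ n m, θ n m = (covar (μ n) (z n m) (y n)) ^ 2)
    (hlim : Tendsto (fun n => covar (μ n) (z n p) (y n)) atTop (nhds 1)) :
    Tendsto
      (fun n => ∫ ω, ∑ m, θ n m * (z n m ω - ∑ m', θ n m' * z n m' ω) ^ 2 ∂(μ n))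
      atTop (nhds 0) := by
  simp only [covar_eq_covariance] at huncorr hθ hlim
  obtain rfl : θ = fun n m ↦ cov[z n m, y n; μ n] ^ 2 := funext₂ hθ
  have hz (n : ℕ) (m : Fin M) : MemLp (z n m) 2 (μ n) :=
    memLp_two_of_variance_ne_zero (hzmeas n m).aestronglyMeasurable (by simp [hzvar])
  have hy (n : ℕ) : MemLp (y n) 2 (μ n) :=
    memLp_two_of_variance_ne_zero (hymeas n).aestronglyMeasurable (by simp [hyvar])
  exact diversity_collapse_general (fun _ ↦ p) hz hzmean (fun n m ↦ (hzvar n m).le)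
    (fun n _ _ hne ↦ huncorr n _ _ hne) hy (fun n ↦ (hyvar n).le) (by simpa using hlim.pow 2)
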